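/- Let H be a real Hilbert space, f : H → ℝ ∪ {+∞} a proper convex lower semicontinuous function with Fenchel conjugate f*, and S : H → H a continuous linear bijection with continuous inverse and adjoint S*. Let p be the unique minimizer of z ↦ f(S z) + (1/2)‖z − v‖² and q the unique minimizer of z ↦ f*((S*)⁻¹ z) + (1/2)‖z − v‖². Then p + q = v (the operator-parameter Moreau decomposition v = Prox_{fS}(v) + Prox_{f*(S*)⁻¹}(v)). -/

import Mathlib

open scoped RealInnerProductSpace

/-!
For convex `g`, the optimality condition for `p = Prox_g(v)` says that `v - p` is a subgradient of
`g` at `p`. Passing to the conjugate swaps points and subgradients, so `p` is a subgradient of `g*`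
at `v - p`, which makes `v - p` the only possible proximal point of `g*` at `v = (v - p) + p`.
The operator version is the case `g = f ∘ S`, since `(f ∘ S)* = f* ∘ (S*)⁻¹`.
-/

open Filter Topology

/-- Convexity of an extended-real-valued function, by Jensen's inequality on segments. Mathlib's
`ConvexOn` does not apply, as `EReal` is not an `ℝ`-module. At `t = 0` and `t = 1` the convention
`0 * ⊤ = 0` makes the inequality trivial; since `⊥ + ⊤ = ⊥`, a function taking the value `⊥`
satisfies it only if it is constantly `⊥`. -/
def ERealConvex {E : Type*} [AddCommGroup E] [Module ℝ E] (f : E → EReal) : Prop :=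
  ∀ x y : E, ∀ t : ℝ, 0 ≤ t → t ≤ 1 →
    f (t • x + (1 - t) • y) ≤ (t : EReal) * f x + ((1 - t : ℝ) : EReal) * f y

/-- The Fenchel conjugate `f*` of `f`, with the dual space identified with `E` through the inner
product. -/
noncomputable def fenchelConjugate {E : Type*} [NormedAddCommGroup E] [InnerProductSpace ℝ E]
    (f : E → EReal) (y : E) : EReal :=
  ⨆ x : E, (⟪x, y⟫ : EReal) - f x

/-- `p` is a proximal point of `f` at `v`, i.e. `p = Prox_f(v)`. It is a predicate because a
minimizer need not exist or be unique for arbitrary `f`. -/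
def IsProx {E : Type*} [NormedAddCommGroup E] (f : E → EReal) (v p : E) : Prop :=
  ∀ z : E, f p + ((1 / 2 * ‖p - v‖ ^ 2 : ℝ) : EReal) ≤ f z + ((1 / 2 * ‖z - v‖ ^ 2 : ℝ) : EReal)

/-- `u` is a subgradient of `f` at `x`, i.e. `u ∈ ∂f(x)`. The value `f x` is not required to be
finite. -/
def IsSubgradientAt {E : Type*} [NormedAddCommGroup E] [InnerProductSpace ℝ E]
    (f : E → EReal) (x u : E) : Prop :=
  ∀ z : E, f x + (⟪u, z - x⟫ : EReal) ≤ f z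

section Finiteness

variable {E : Type*} [NormedAddCommGroup E] {f : E → EReal} {v p : E}

theorem IsProx.ne_top (hp : IsProx f v p) (hproper : ∃ z, f z ≠ ⊤) : f p ≠ ⊤ := by
  obtain ⟨z, hz⟩ := hproper
  intro htop
  have hle := hp z
  rw [htop, EReal.top_add_coe, top_le_iff] at hle
  exact EReal.add_ne_top hz (EReal.coe_ne_top _) hle

theorem IsProx.ne_bot (hp : IsProx f v p) (hbot : f p ≠ ⊥) (z : E) : f z ≠ ⊥ := by
  intro hz
  have hle := hp z
  rw [hz, EReal.bot_add, le_bot_iff, EReal.add_eq_bot_iff] at hle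
  exact hle.elim hbot (EReal.coe_ne_bot _)

end Finiteness

theorem nonneg_of_forall_nonneg_add_mul {c d : ℝ}
    (h : ∀ t : ℝ, 0 < t → t ≤ 1 → 0 ≤ c + t * d) : 0 ≤ c := by
  have hlim : Tendsto (fun t : ℝ ↦ c + t * d) (𝓝[>] 0) (𝓝 c) :=
    tendsto_nhdsWithin_of_tendsto_nhds <| Continuous.tendsto' (by fun_prop) _ _ (by simp)
  refine ge_of_tendsto hlim ?_
  filter_upwards [Ioc_mem_nhdsGT zero_lt_one] with t ht
  exact h t ht.1 ht.2

section Moreau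

variable {E : Type*} [NormedAddCommGroup E] [InnerProductSpace ℝ E] {f : E → EReal} {v p q x u : E}

theorem IsProx.add_inner_le (hf : ERealConvex f) (hp : IsProx f v p) {z : E} {a b : ℝ}
    (ha : f z = a) (hb : f p = b) : b + ⟪v - p, z - p⟫ ≤ a := by
  suffices h : 0 ≤ a - (b + ⟪v - p, z - p⟫) from sub_nonneg.mp h
  refine nonneg_of_forall_nonneg_add_mul (d := ‖z - p‖ ^ 2 / 2) fun t ht ht1 ↦ ?_
  have hle : b + 1 / 2 * ‖p - v‖ ^ 2 ≤
      t * a + (1 - t) * b + 1 / 2 * ‖t • z + (1 - t) • p - v‖ ^ 2 := by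
    have hmin := (hp (t • z + (1 - t) • p)).trans (add_le_add_left (hf z p t ht.le ht1) _)
    rw [ha, hb] at hmin
    exact_mod_cast hmin
  have hnorm : ‖t • z + (1 - t) • p - v‖ ^ 2 =
      ‖p - v‖ ^ 2 - 2 * (t * ⟪v - p, z - p⟫) + t ^ 2 * ‖z - p‖ ^ 2 := by
    rw [show t • z + (1 - t) • p - v = t • (z - p) - (v - p) by module, norm_sub_sq_real,
      real_inner_smul_left, real_inner_comm, norm_smul, mul_pow, Real.norm_eq_abs, sq_abs,
      norm_sub_rev v p]
    ring
  refine (mul_nonneg_iff_of_pos_left ht).mp ?_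
  linear_combination hle + hnorm / 2

theorem IsProx.isSubgradientAt (hf : ERealConvex f) (hp : IsProx f v p) :
    IsSubgradientAt f p (v - p) := by
  intro z
  by_cases hz_top : f z = ⊤
  · simp only [hz_top, le_top]
  by_cases hp_bot : f p = ⊥
  · simp only [hp_bot, EReal.bot_add, bot_le]
  lift f p to ℝ using ⟨hp.ne_top ⟨z, hz_top⟩, hp_bot⟩ with b hb
  lift f z to ℝ using ⟨hz_top, hp.ne_bot (by simp [← hb]) z⟩ with a ha
  exact_mod_cast hp.add_inner_le hf ha.symm hb.symm

theorem inner_sub_le_fenchelConjugate (f : E → EReal) (x y : E) :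
    (⟪x, y⟫ : EReal) - f x ≤ fenchelConjugate f y :=
  le_iSup (fun x ↦ (⟪x, y⟫ : EReal) - f x) x

theorem IsSubgradientAt.fenchelConjugate_eq (h : IsSubgradientAt f x u) :
    fenchelConjugate f u = (⟪x, u⟫ : EReal) - f x := by
  refine le_antisymm (iSup_le fun z ↦ ?_) (inner_sub_le_fenchelConjugate f x u)
  calc (⟪z, u⟫ : EReal) - f z
      ≤ (⟪z, u⟫ : EReal) - (f x + (⟪u, z - x⟫ : EReal)) := EReal.sub_le_sub le_rfl (h z)
    _ = (⟪x, u⟫ : EReal) - f x := by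
      induction f x with
      | bot => simp
      | top => simp
      | coe b =>
        norm_cast
        rw [inner_sub_right, real_inner_comm z u, real_inner_comm x u]
        ring

theorem IsSubgradientAt.isSubgradientAt_fenchelConjugate (h : IsSubgradientAt f x u) :
    IsSubgradientAt (fenchelConjugate f) u x := by
  intro y
  calc fenchelConjugate f u + (⟪x, y - u⟫ : EReal)
      = (⟪x, y⟫ : EReal) - f x := by
        rw [h.fenchelConjugate_eq]
        induction f x with
        | bot => simp
        | top => simp
        | coe b =>
          norm_cast
          rw [inner_sub_right]
          ring
    _ ≤ fenchelConjugate f y := inner_sub_le_fenchelConjugate f x y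

theorem IsSubgradientAt.eq_of_isProx (h : IsSubgradientAt f x u) (htop : f x ≠ ⊤) (hbot : f x ≠ ⊥)
    (hq : IsProx f (x + u) q) : q = x := by
  have hle := (add_le_add_left (h q) _).trans (hq x)
  lift f x to ℝ using ⟨htop, hbot⟩ with b
  replace hle : b + ⟪u, q - x⟫ + 1 / 2 * ‖q - (x + u)‖ ^ 2 ≤ b + 1 / 2 * ‖x - (x + u)‖ ^ 2 := by
    exact_mod_cast hle
  rw [← sub_sub, norm_sub_sq_real (q - x) u, real_inner_comm, sub_add_cancel_left, norm_neg] at hle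
  have hnorm : ‖q - x‖ ^ 2 ≤ 0 := by linarith
  simpa [sub_eq_zero] using hnorm

theorem IsProx.add_eq_of_isProx_fenchelConjugate (hf : ERealConvex f) (hproper : ∃ x, f x ≠ ⊤)
    (hnobot : ∀ x, f x ≠ ⊥) (hp : IsProx f v p) (hq : IsProx (fenchelConjugate f) v q) :
    p + q = v := by
  have hsub := hp.isSubgradientAt hf
  have hconj := hsub.fenchelConjugate_eq
  lift f p to ℝ using ⟨hp.ne_top hproper, hnobot p⟩ with b
  rw [← EReal.coe_sub] at hconj
  have hq_eq : q = v - p := hsub.isSubgradientAt_fenchelConjugate.eq_of_isProx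
    (hconj ▸ EReal.coe_ne_top _) (hconj ▸ EReal.coe_ne_bot _) (by rwa [sub_add_cancel])
  rw [hq_eq, add_sub_cancel]

end Moreau

section Composition

variable {H K : Type*} [NormedAddCommGroup H] [InnerProductSpace ℝ H]
  [NormedAddCommGroup K] [InnerProductSpace ℝ K]

theorem ERealConvex.comp_linearMap {f : K → EReal} (hf : ERealConvex f) (S : H →ₗ[ℝ] K) :
    ERealConvex (f ∘ S) := by
  intro x y t ht ht1
  simpa only [Function.comp_apply, map_add, map_smul] using hf (S x) (S y) t ht ht1

theorem fenchelConjugate_comp (f : K → EReal) {S T : H → K} (hS : Function.Surjective S)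
    (hST : ∀ x z, ⟪S x, T z⟫ = ⟪x, z⟫) :
    fenchelConjugate (f ∘ S) = fenchelConjugate f ∘ T := by
  ext z
  simp only [fenchelConjugate, Function.comp_apply, ← hS.iSup_comp, hST]

/-- The identity `⟪S x, T z⟫ = ⟪x, z⟫` encodes `S* (T z) = z`; without completeness `S*` may
not exist as an operator. -/
theorem stmt_8_general (f : K → EReal) (hconv : ERealConvex f) (hproper : ∃ x, f x ≠ ⊤)
    (hnobot : ∀ x, f x ≠ ⊥) (S : H →ₗ[ℝ] K) (hS : Function.Surjective S) (T : H → K)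
    (hST : ∀ x z, ⟪S x, T z⟫ = ⟪x, z⟫) (v p q : H)
    (hp : IsProx (f ∘ S) v p) (hq : IsProx (fenchelConjugate f ∘ T) v q) :
    p + q = v := by
  rw [← fenchelConjugate_comp f hS hST] at hq
  exact hp.add_eq_of_isProx_fenchelConjugate (hconv.comp_linearMap S)
    (hS.exists.mp hproper) (fun x ↦ hnobot (S x)) hq

end Composition

/-- operator-parameter Moreau decomposition
`v = Prox_{fS}(v) + Prox_{f*(S*)⁻¹}(v)`. Here `f : H → ℝ ∪ {+∞}` is CCP with Fenchel
conjugate `f*`, `S : H ≃L[ℝ] H` with adjoint `S*`, and `T = (S*)⁻¹` (two-sided inverse of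
the adjoint). `p` is the (unique) minimizer of `z ↦ f(S z) + (1/2)‖z − v‖²` and `q` the
(unique) minimizer of `z ↦ f*((S*)⁻¹ z) + (1/2)‖z − v‖²`; then `p + q = v`. -/
theorem stmt_8 {H : Type*} [NormedAddCommGroup H] [InnerProductSpace ℝ H] [CompleteSpace H]
    (f : H → EReal)
    (hconv : ∀ x y : H, ∀ t : ℝ, 0 ≤ t → t ≤ 1 →
      f (t • x + (1 - t) • y) ≤ ((t : ℝ) : EReal) * f x + (((1 - t : ℝ)) : EReal) * f y)
    (hlsc : LowerSemicontinuous f)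
    (hproper : ∃ x, f x ≠ ⊤) (hnobot : ∀ x, f x ≠ ⊥)
    (fstar : H → EReal)
    (hfstar : ∀ y : H, fstar y = ⨆ x : H, ((⟪x, y⟫ : ℝ) : EReal) - f x)
    (S : H ≃L[ℝ] H) (T : H →L[ℝ] H)
    (hT : ∀ z : H, ContinuousLinearMap.adjoint (S : H →L[ℝ] H) (T z) = z ∧
        T (ContinuousLinearMap.adjoint (S : H →L[ℝ] H) z) = z)
    (v : H) (p q : H)
    (hp : ∀ z : H, f (S p) + (((1 : ℝ) / 2 * ‖p - v‖ ^ 2 : ℝ) : EReal) ≤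
        f (S z) + (((1 : ℝ) / 2 * ‖z - v‖ ^ 2 : ℝ) : EReal))
    (hq : ∀ z : H, fstar (T q) + (((1 : ℝ) / 2 * ‖q - v‖ ^ 2 : ℝ) : EReal) ≤
        fstar (T z) + (((1 : ℝ) / 2 * ‖z - v‖ ^ 2 : ℝ) : EReal)) :
    p + q = v := by
  obtain rfl : fstar = fenchelConjugate f := funext hfstar
  have hST (x z : H) : ⟪S x, T z⟫ = ⟪x, z⟫ := by
    rw [← S.coe_coe, ← ContinuousLinearMap.adjoint_inner_right, (hT z).1]
  exact stmt_8_general f hconv hproper hnobot S.toLinearMap S.surjective T hST v p q hp hq
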